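/- Let {E_ℓ} be a Kraus family on the d₁×d₁ complex matrices whose channel is faithful, and let J_ul be a conserved quantity of this channel with phase λ. Let {C_ℓ} be d₁×d₂ complex matrices and {D_ℓ} be d₂×d₂ complex matrices (over the same finite index set) with ∑_ℓ E_ℓ† C_ℓ = 0 and ∑_ℓ (C_ℓ† C_ℓ + D_ℓ† D_ℓ) = I_{d₂}, so that the block upper-triangular matrices A_ℓ = [[E_ℓ, C_ℓ],[0, D_ℓ]] form a Kraus family on the (d₁+d₂)×(d₁+d₂) matrices. Suppose the linear map Φ(X) = ∑_ℓ D_ℓ† X D_ℓ − e^{−iλ} X on the d₂×d₂ complex matrices is bijective, and set J_lr = −Φ^{−1}(∑_ℓ C_ℓ† J_ul C_ℓ). Then the block-diagonal matrix J = [[J_ul, 0],[0, J_lr]] satisfies ∑_ℓ A_ℓ† J A_ℓ = e^{−iλ} J, i.e., J is a conserved quantity of the extended channel with phase λ. -/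

import Mathlib

open Matrix ComplexOrder

/-!
A conserved quantity `J` of a faithful channel `ℰ` commutes with every Kraus operator up to its
phase factor `c`. Indeed, for `T ℓ = J * E ℓ - c • (E ℓ * J)` one finds
`∑ ℓ, (T ℓ)ᴴ * T ℓ = ℰ†(Jᴴ * J) - Jᴴ * J`, whose expectation in any stationary state `ρ` vanishes;
when `ρ` is positive definite, every `T ℓ` is zero. Passing to adjoints,
`∑ ℓ, (E ℓ)ᴴ * J * C ℓ = c • J * ∑ ℓ, (E ℓ)ᴴ * C ℓ = 0`, so the off-diagonal blocks of the dual
channel applied to `fromBlocks J 0 0 J'` vanish, and the lower-right block is the linear equation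
imposed on `J'`.
-/

section Channels

variable {R ι k m n : Type*} [Fintype ι]

section Definitions

variable [NonUnitalSemiring R] [StarRing R]

/-- The completely positive map `ρ ↦ ∑ ℓ, A ℓ * ρ * (A ℓ)ᴴ` with Kraus operators `A`
(Schrödinger picture). The operators may be rectangular. -/
def krausMap [Fintype n] (A : ι → Matrix m n R) (ρ : Matrix n n R) : Matrix m m R :=
  ∑ ℓ, A ℓ * ρ * (A ℓ)ᴴ

/-- The dual `X ↦ ∑ ℓ, (A ℓ)ᴴ * X * A ℓ` of `krausMap A` for the trace pairing
(Heisenberg picture). -/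
def krausDual [Fintype m] (A : ι → Matrix m n R) (X : Matrix m m R) : Matrix n n R :=
  ∑ ℓ, (A ℓ)ᴴ * X * A ℓ

/-- `J` is a conserved quantity of the channel with Kraus operators `A`. The phase `λ` is recorded
by the factor `c = e^{-iλ}`. -/
def IsConservedQuantity [Fintype n] (A : ι → Matrix n n R) (c : R) (J : Matrix n n R) : Prop :=
  krausDual A J = c • J

end Definitions

section Dual

theorem krausDual_conjTranspose [NonUnitalSemiring R] [StarRing R] [Fintype m]
    (A : ι → Matrix m n R) (X : Matrix m m R) : krausDual A Xᴴ = (krausDual A X)ᴴ := by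
  simp only [krausDual, conjTranspose_sum, conjTranspose_mul, conjTranspose_conjTranspose,
    Matrix.mul_assoc]

theorem krausDual_one [Semiring R] [StarRing R] [Fintype m] [DecidableEq m]
    (A : ι → Matrix m n R) : krausDual A 1 = ∑ ℓ, (A ℓ)ᴴ * A ℓ := by
  simp only [krausDual, Matrix.mul_one]

theorem trace_krausDual_mul [CommSemiring R] [StarRing R] [Fintype m] [Fintype n]
    (A : ι → Matrix m n R) (X : Matrix m m R) (ρ : Matrix n n R) :
    (krausDual A X * ρ).trace = (X * krausMap A ρ).trace := by
  simp only [krausDual, krausMap, Matrix.sum_mul, Matrix.mul_sum, trace_sum]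
  refine Finset.sum_congr rfl fun ℓ _ ↦ ?_
  calc ((A ℓ)ᴴ * X * A ℓ * ρ).trace = ((A ℓ)ᴴ * (X * (A ℓ * ρ))).trace := by
        simp only [Matrix.mul_assoc]
    _ = (X * (A ℓ * ρ * (A ℓ)ᴴ)).trace := by
        rw [trace_mul_comm, Matrix.mul_assoc X]

theorem IsConservedQuantity.conjTranspose [CommSemiring R] [StarRing R] [Fintype n]
    {A : ι → Matrix n n R} {c : R} {J : Matrix n n R} (hJ : IsConservedQuantity A c J) :
    IsConservedQuantity A (star c) Jᴴ := by
  rw [IsConservedQuantity, krausDual_conjTranspose, hJ, conjTranspose_smul]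

end Dual

section Faithful

variable [Ring R] [PartialOrder R] [StarRing R] [IsOrderedAddMonoid R] [Fintype m] [Fintype n]

theorem trace_mul_mul_conjTranspose_eq_zero_iff {ρ : Matrix n n R} (hρ : ρ.PosDef)
    {K : Matrix m n R} : (K * ρ * Kᴴ).trace = 0 ↔ K = 0 := by
  refine ⟨fun htrace ↦ ?_, fun hK ↦ by simp [hK]⟩
  have hdiag : ∀ i, (K * ρ * Kᴴ) i i = 0 := fun i ↦
    (Finset.sum_eq_zero_iff_of_nonneg fun _ _ ↦
      (hρ.posSemidef.mul_mul_conjTranspose_same K).diag_nonneg).1 htrace i (Finset.mem_univ i)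
  have hrow : ∀ i, star (K i) = 0 := fun i ↦ by
    by_contra hne
    refine (hρ.dotProduct_mulVec_pos hne).ne' ?_
    rw [star_star, dotProduct_mulVec]
    exact hdiag i
  exact funext fun i ↦ star_eq_zero.1 (hrow i)

theorem trace_krausMap_eq_zero_iff {ρ : Matrix n n R} (hρ : ρ.PosDef) {A : ι → Matrix m n R} :
    (krausMap A ρ).trace = 0 ↔ A = 0 := by
  rw [krausMap, trace_sum, Finset.sum_eq_zero_iff_of_nonneg fun ℓ _ ↦
    (hρ.posSemidef.mul_mul_conjTranspose_same (A ℓ)).trace_nonneg]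
  simp only [Finset.mem_univ, forall_const, trace_mul_mul_conjTranspose_eq_zero_iff hρ,
    funext_iff, Pi.zero_apply]

end Faithful

section Commutation

variable [CommRing R] [StarRing R] [Fintype n]

/-- The failure of `J` and `A` to commute up to the factor `c`. -/
def twistedCommutator (c : R) (J A : Matrix n n R) : Matrix n n R :=
  J * A - c • (A * J)

theorem conjTranspose_twistedCommutator_mul_self (c : R) (J A : Matrix n n R) :
    (twistedCommutator c J A)ᴴ * twistedCommutator c J A =
      Aᴴ * (Jᴴ * J) * A - c • (Aᴴ * Jᴴ * A * J) - star c • (Jᴴ * (Aᴴ * J * A)) +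
        (star c * c) • (Jᴴ * (Aᴴ * A) * J) := by
  simp only [twistedCommutator, conjTranspose_sub, conjTranspose_smul, conjTranspose_mul,
    Matrix.sub_mul, Matrix.mul_sub, Matrix.smul_mul, Matrix.mul_smul, smul_smul, smul_sub,
    Matrix.mul_assoc, mul_comm c]
  abel

variable [DecidableEq n] {E : ι → Matrix n n R} {c : R} {J : Matrix n n R}

theorem IsConservedQuantity.krausDual_twistedCommutator_one (hJ : IsConservedQuantity E c J)
    (hE : krausDual E 1 = 1) (hc : c ∈ unitary R) :
    krausDual (fun ℓ ↦ twistedCommutator c J (E ℓ)) 1 = krausDual E (Jᴴ * J) - Jᴴ * J := by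
  have expand : krausDual (fun ℓ ↦ twistedCommutator c J (E ℓ)) 1 =
      krausDual E (Jᴴ * J) - c • (krausDual E Jᴴ * J) - star c • (Jᴴ * krausDual E J) +
        (star c * c) • (Jᴴ * krausDual E 1 * J) := by
    simp only [krausDual_one, conjTranspose_twistedCommutator_mul_self]
    simp only [krausDual, Finset.sum_add_distrib, Finset.sum_sub_distrib, ← Finset.smul_sum,
      Matrix.sum_mul, Matrix.mul_sum]
  rw [expand, hJ.conjTranspose, hJ, hE]
  simp only [Matrix.smul_mul, Matrix.mul_smul, smul_smul, mul_comm c,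
    Unitary.star_mul_self_of_mem hc, one_smul, Matrix.mul_one]
  abel

variable [PartialOrder R] [IsOrderedAddMonoid R] {ρ : Matrix n n R}

theorem IsConservedQuantity.mul_eq_smul_mul (hJ : IsConservedQuantity E c J)
    (hE : krausDual E 1 = 1) (hc : c ∈ unitary R) (hρ : ρ.PosDef) (hfix : krausMap E ρ = ρ)
    (ℓ : ι) : J * E ℓ = c • (E ℓ * J) := by
  have htrace : (krausMap (fun ℓ ↦ twistedCommutator c J (E ℓ)) ρ).trace = 0 := by
    rw [← Matrix.one_mul (krausMap _ ρ), ← trace_krausDual_mul,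
      hJ.krausDual_twistedCommutator_one hE hc, Matrix.sub_mul, trace_sub, trace_krausDual_mul,
      hfix, sub_self]
  exact sub_eq_zero.1 (congrFun ((trace_krausMap_eq_zero_iff hρ).1 htrace) ℓ)

theorem IsConservedQuantity.conjTranspose_mul_eq_smul_mul (hJ : IsConservedQuantity E c J)
    (hE : krausDual E 1 = 1) (hc : c ∈ unitary R) (hρ : ρ.PosDef) (hfix : krausMap E ρ = ρ)
    (ℓ : ι) : (E ℓ)ᴴ * J = c • (J * (E ℓ)ᴴ) := by
  simpa using congrArg Matrix.conjTranspose
    (hJ.conjTranspose.mul_eq_smul_mul hE (Unitary.star_mem hc) hρ hfix ℓ)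

theorem IsConservedQuantity.sum_conjTranspose_mul_mul_eq_zero (hJ : IsConservedQuantity E c J)
    (hE : krausDual E 1 = 1) (hc : c ∈ unitary R) (hρ : ρ.PosDef) (hfix : krausMap E ρ = ρ)
    {C : ι → Matrix n k R} (hC : ∑ ℓ, (E ℓ)ᴴ * C ℓ = 0) : ∑ ℓ, (E ℓ)ᴴ * J * C ℓ = 0 := by
  calc ∑ ℓ, (E ℓ)ᴴ * J * C ℓ = c • (J * ∑ ℓ, (E ℓ)ᴴ * C ℓ) := by
        simp only [hJ.conjTranspose_mul_eq_smul_mul hE hc hρ hfix, Matrix.smul_mul,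
          Matrix.mul_assoc, Finset.smul_sum, Matrix.mul_sum]
    _ = 0 := by rw [hC, Matrix.mul_zero, smul_zero]

end Commutation

section BlockTriangular

theorem sum_fromBlocks {l o α : Type*} [AddCommMonoid α] (A : ι → Matrix n l α)
    (B : ι → Matrix n m α) (C : ι → Matrix o l α) (D : ι → Matrix o m α) :
    ∑ ℓ, fromBlocks (A ℓ) (B ℓ) (C ℓ) (D ℓ) =
      fromBlocks (∑ ℓ, A ℓ) (∑ ℓ, B ℓ) (∑ ℓ, C ℓ) (∑ ℓ, D ℓ) := by
  ext (i | i) (j | j) <;> simp [Matrix.sum_apply]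

theorem krausDual_fromBlocks [NonUnitalSemiring R] [StarRing R] [Fintype m] [Fintype n]
    (E : ι → Matrix m m R) (C : ι → Matrix m n R) (D : ι → Matrix n n R)
    (J : Matrix m m R) (J' : Matrix n n R) :
    krausDual (fun ℓ ↦ fromBlocks (E ℓ) (C ℓ) 0 (D ℓ)) (fromBlocks J 0 0 J') =
      fromBlocks (krausDual E J) (∑ ℓ, (E ℓ)ᴴ * J * C ℓ) (∑ ℓ, (C ℓ)ᴴ * J * E ℓ)
        (krausDual C J + krausDual D J') := by
  simp only [krausDual, fromBlocks_conjTranspose, fromBlocks_multiply, conjTranspose_zero,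
    Matrix.mul_zero, Matrix.zero_mul, add_zero, zero_add, sum_fromBlocks, Finset.sum_add_distrib]

end BlockTriangular

theorem conserved_quantity_extension_general [CommRing R] [StarRing R] [PartialOrder R]
    [IsOrderedAddMonoid R] [Fintype m] [DecidableEq m] [Fintype n]
    {E : ι → Matrix m m R} (hE : ∑ ℓ, (E ℓ)ᴴ * E ℓ = 1)
    {ρ : Matrix m m R} (hρ : ρ.PosDef) (hfix : krausMap E ρ = ρ)
    {c : R} (hc : c ∈ unitary R) {J : Matrix m m R} (hJ : IsConservedQuantity E c J)
    {C : ι → Matrix m n R} (hC : ∑ ℓ, (E ℓ)ᴴ * C ℓ = 0)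
    {D : ι → Matrix n n R} {J' : Matrix n n R}
    (hJ' : krausDual D J' - c • J' = -krausDual C J) :
    IsConservedQuantity (fun ℓ ↦ fromBlocks (E ℓ) (C ℓ) 0 (D ℓ)) c (fromBlocks J 0 0 J') := by
  have hunital : krausDual E 1 = 1 := (krausDual_one E).trans hE
  have upper_right : ∑ ℓ, (E ℓ)ᴴ * J * C ℓ = 0 :=
    hJ.sum_conjTranspose_mul_mul_eq_zero hunital hc hρ hfix hC
  have lower_left : ∑ ℓ, (C ℓ)ᴴ * J * E ℓ = 0 := by
    simpa [conjTranspose_sum, Matrix.mul_assoc] using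
      congrArg Matrix.conjTranspose (hJ.conjTranspose.sum_conjTranspose_mul_mul_eq_zero hunital
        (Unitary.star_mem hc) hρ hfix hC)
  have lower_right : krausDual C J + krausDual D J' = c • J' := by
    rw [sub_eq_iff_eq_add.1 hJ', add_neg_cancel_left]
  rw [IsConservedQuantity, krausDual_fromBlocks, hJ, upper_right, lower_left, lower_right,
    fromBlocks_smul, smul_zero, smul_zero]

end Channels

theorem exp_neg_I_mul_ofReal_mem_unitary (x : ℝ) :
    Complex.exp (-(Complex.I * (x : ℂ))) ∈ unitary ℂ := by
  rw [Unitary.mem_iff_star_mul_self, Complex.star_def, ← Complex.exp_conj, ← Complex.exp_add]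
  simp

/-- Extension of conserved quantities to a channel with a decaying subspace:
if `J_ul` is a conserved quantity with phase `λ` of the faithful channel `{Eℓ}`, and `J_lr` is
defined via the inverse of `Φ(X) = ∑ ℓ, Dℓᴴ X Dℓ - e^{-iλ} X` (assumed bijective), then
`J = [[J_ul, 0], [0, J_lr]]` is a conserved quantity with phase `λ` of the extended channel
with Kraus operators `Aℓ = [[Eℓ, Cℓ], [0, Dℓ]]`. -/
theorem conserved_quantity_extension
    {d₁ d₂ : ℕ} {ι : Type*} [Fintype ι]
    (E : ι → Matrix (Fin d₁) (Fin d₁) ℂ)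
    (hKraus : ∑ ℓ, (E ℓ)ᴴ * E ℓ = 1)
    (hFaithful : ∃ ρ : Matrix (Fin d₁) (Fin d₁) ℂ,
      ρ.PosDef ∧ ∑ ℓ, E ℓ * ρ * (E ℓ)ᴴ = ρ)
    (Jul : Matrix (Fin d₁) (Fin d₁) ℂ) (lam : ℝ)
    (hJul : ∑ ℓ, (E ℓ)ᴴ * Jul * E ℓ = Complex.exp (-(Complex.I * (lam : ℂ))) • Jul)
    (C : ι → Matrix (Fin d₁) (Fin d₂) ℂ)
    (Dm : ι → Matrix (Fin d₂) (Fin d₂) ℂ)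
    (hC : ∑ ℓ, (E ℓ)ᴴ * C ℓ = 0)
    (hQ : ∑ ℓ, ((C ℓ)ᴴ * C ℓ + (Dm ℓ)ᴴ * Dm ℓ) = 1)
    (Φ : Matrix (Fin d₂) (Fin d₂) ℂ → Matrix (Fin d₂) (Fin d₂) ℂ)
    (hΦ : ∀ X, Φ X = (∑ ℓ, (Dm ℓ)ᴴ * X * Dm ℓ) - Complex.exp (-(Complex.I * (lam : ℂ))) • X)
    (hΦbij : Function.Bijective Φ)
    (Jlr : Matrix (Fin d₂) (Fin d₂) ℂ)
    (hJlr : Φ Jlr = -(∑ ℓ, (C ℓ)ᴴ * Jul * C ℓ)) :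
    ∑ ℓ, (Matrix.fromBlocks (E ℓ) (C ℓ) 0 (Dm ℓ))ᴴ
        * Matrix.fromBlocks Jul 0 0 Jlr
        * Matrix.fromBlocks (E ℓ) (C ℓ) 0 (Dm ℓ)
      = Complex.exp (-(Complex.I * (lam : ℂ))) • Matrix.fromBlocks Jul 0 0 Jlr := by
  obtain ⟨ρ, hρ, hfix⟩ := hFaithful
  exact conserved_quantity_extension_general hKraus hρ hfix
    (exp_neg_I_mul_ofReal_mem_unitary lam) hJul hC ((hΦ Jlr).symm.trans hJlr)
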